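/- Let 𝓓 = (Ω, 𝓑) be a β(i) design with parameter (v, k, d), where v ≤ 2k and k−d ≥ i+2. If 𝓓 is not a β(i+1) design and i ≥ 18, then (i−1)(3i−1+√(i²−14i+1))/(2(i+1)) < k−d ≤ 2i; in particular 2i−8 ≤ k−d ≤ 2i. -/

import Mathlib

open Finset

variable {α : Type*} [Fintype α] [DecidableEq α]

/-- `𝓑` is a design on the finite type `α` of cardinality `v`, with block size `k` and
maximal pairwise block intersection size `d`. -/
def IsDesign (𝓑 : Finset (Finset α)) (v k d : ℕ) : Prop :=
  Fintype.card α = v ∧ 2 ≤ 𝓑.card ∧ d < k ∧ k < v ∧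
  (∀ B ∈ 𝓑, B.card = k) ∧
  (∀ B ∈ 𝓑, ∀ C ∈ 𝓑, B ≠ C → (B ∩ C).card ≤ d) ∧
  (∃ B ∈ 𝓑, ∃ C ∈ 𝓑, B ≠ C ∧ (B ∩ C).card = d)

/-- `𝓑` is a `β(i)` design with parameters `(v, k, d)`: a design such that
`1 ≤ i ≤ (v - d + 1)/2` and every `(d + 2i - 1)`-element subset `X` of `Ω` admits a
unique block `B` with `|X ∩ B| ≥ d + i`. -/
def IsBetaDesign (𝓑 : Finset (Finset α)) (v k d i : ℕ) : Prop :=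
  IsDesign 𝓑 v k d ∧ 1 ≤ i ∧ 2 * i ≤ v - d + 1 ∧
  ∀ X : Finset α, X.card = d + 2 * i - 1 →
    ∃! B, B ∈ 𝓑 ∧ d + i ≤ (X ∩ B).card

/-!
Write `k = d + i + a` and `v = d + 2i + 2a + e`. Counting blocks around a set that witnesses the
failure of `β(i+1)`, and around a largest set meeting every block in fewer than `d + i` points,
gives `a d + i ≤ i e ≤ (a + 1) d + e`.

A `β(i)` design is a perfect covering in a Johnson scheme: every `(d + 2i - 1)`-set `X` determines a
unique block with at most `a` points outside `X`. Functions of `X` that depend only on the number of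
these points turn a root of a Lloyd polynomial into an eigenvalue of the
Johnson graph, so every such root is of the form `j (v + 1 - j)` with `j` a natural number. At two
consecutive such values near the top of the spectrum the Lloyd polynomial splits into explicit
linear and quadratic factors. The counting bounds determine their signs: unless `k - d` lies beyond
the larger root of a quadratic polynomial depending on `i`, the Lloyd polynomial changes sign, and
hence vanishes, strictly between two consecutive eigenvalues.
-/

section Counting

omit [Fintype α] in
theorem card_inter_union_add_card_inter_inter (X B C : Finset α) :
    #(X ∩ (B ∪ C)) + #(X ∩ (B ∩ C)) = #(X ∩ B) + #(X ∩ C) := by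
  rw [inter_union_distrib_left, inter_inter_distrib_left, card_union_add_card_inter]

omit [Fintype α] in
theorem card_mul_le_card_mul_of_cover_of_packing {ι : Type*} {s : Finset ι}
    {f g : ι → Finset α} {S T : Finset α} {m n : ℕ}
    (hcover : S ⊆ s.biUnion f) (hf : ∀ c ∈ s, #(f c) ≤ m)
    (hpack : s.biUnion g ⊆ T) (hdisj : (s : Set ι).PairwiseDisjoint g)
    (hg : ∀ c ∈ s, n ≤ #(g c)) : #S * n ≤ #T * m :=
  calc #S * n ≤ #s * m * n := by
        gcongr
        exact (card_le_card hcover).trans (card_biUnion_le_card_mul s f m hf)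
    _ = #s * n * m := by ring
    _ ≤ #T * m := by
        gcongr
        rw [← smul_eq_mul]
        exact (card_nsmul_le_sum s _ n hg).trans
          ((card_biUnion hdisj).symm.le.trans (card_le_card hpack))

end Counting

namespace IsDesign

variable {𝓑 : Finset (Finset α)} {v k d : ℕ} {X B C : Finset α}

theorem card_inter_le (h : IsDesign 𝓑 v k d) (hB : B ∈ 𝓑) (hC : C ∈ 𝓑) (hne : B ≠ C) :
    #(B ∩ C) ≤ d :=
  h.2.2.2.2.2.1 B hB C hC hne

theorem card_block (h : IsDesign 𝓑 v k d) (hB : B ∈ 𝓑) : #B = k :=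
  h.2.2.2.2.1 B hB

theorem exists_mem (h : IsDesign 𝓑 v k d) : ∃ B, B ∈ 𝓑 :=
  card_pos.1 (by have := h.2.1; omega)

theorem eq_of_card_add_lt (h : IsDesign 𝓑 v k d) (hB : B ∈ 𝓑) (hC : C ∈ 𝓑)
    (hX : #X + d < #(X ∩ B) + #(X ∩ C)) : B = C := by
  by_contra hne
  have := card_inter_union_add_card_inter_inter X B C
  have := card_le_card (inter_subset_left : X ∩ (B ∪ C) ⊆ X)
  have := card_le_card (inter_subset_right : X ∩ (B ∩ C) ⊆ B ∩ C)
  have := h.card_inter_le hB hC hne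
  omega

theorem inter_subset_of_card_add_le (h : IsDesign 𝓑 v k d) (hB : B ∈ 𝓑) (hC : C ∈ 𝓑)
    (hne : B ≠ C) (hX : #X + d ≤ #(X ∩ B) + #(X ∩ C)) : B ∩ C ⊆ X := by
  have := card_inter_union_add_card_inter_inter X B C
  have := card_le_card (inter_subset_left : X ∩ (B ∪ C) ⊆ X)
  have := h.card_inter_le hB hC hne
  exact inter_eq_right.1 (eq_of_subset_of_card_le inter_subset_right (by omega))

theorem subset_union_of_card_add_le (h : IsDesign 𝓑 v k d) (hB : B ∈ 𝓑) (hC : C ∈ 𝓑)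
    (hne : B ≠ C) (hX : #X + d ≤ #(X ∩ B) + #(X ∩ C)) : X ⊆ B ∪ C := by
  have := card_inter_union_add_card_inter_inter X B C
  have := card_le_card (inter_subset_right : X ∩ (B ∩ C) ⊆ B ∩ C)
  have := h.card_inter_le hB hC hne
  exact inter_eq_left.1 (eq_of_subset_of_card_le inter_subset_left (by omega))

theorem pairwiseDisjoint_block_sdiff (h : IsDesign 𝓑 v k d) {m : ℕ} (hX : #X + d ≤ 2 * m) :
    (({C ∈ 𝓑 | #(X ∩ C) = m} : Finset (Finset α)) : Set (Finset α)).PairwiseDisjoint (· \ X) := by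
  intro B hB C hC hne
  obtain ⟨hB, hXB⟩ := mem_filter.1 hB
  obtain ⟨hC, hXC⟩ := mem_filter.1 hC
  refine disjoint_left.2 fun x hxB hxC => (mem_sdiff.1 hxB).2 ?_
  exact h.inter_subset_of_card_add_le hB hC hne (by omega)
    (mem_inter.2 ⟨(mem_sdiff.1 hxB).1, (mem_sdiff.1 hxC).1⟩)

theorem pairwiseDisjoint_sdiff_block (h : IsDesign 𝓑 v k d) {m : ℕ} (hX : #X + d ≤ 2 * m) :
    (({C ∈ 𝓑 | #(X ∩ C) = m} : Finset (Finset α)) : Set (Finset α)).PairwiseDisjoint (X \ ·) := by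
  intro B hB C hC hne
  obtain ⟨hB, hXB⟩ := mem_filter.1 hB
  obtain ⟨hC, hXC⟩ := mem_filter.1 hC
  refine disjoint_left.2 fun x hxB hxC => ?_
  exact (mem_union.1 (h.subset_union_of_card_add_le hB hC hne (by omega) (mem_sdiff.1 hxB).1)).elim
    (mem_sdiff.1 hxB).2 (mem_sdiff.1 hxC).2

theorem two_mul_le_add (h : IsDesign 𝓑 v k d) : 2 * k ≤ v + d := by
  obtain ⟨hv, -, -, -, hk, -, B, hB, C, hC, -, hd⟩ := h
  have := card_union_add_card_inter B C
  have := card_le_univ (B ∪ C)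
  have := hk B hB
  have := hk C hC
  omega

end IsDesign

namespace IsBetaDesign

variable {𝓑 : Finset (Finset α)} {v k d i a e : ℕ}

theorem exists_le_card_inter (h : IsBetaDesign 𝓑 v k d i) {X : Finset α}
    (hX : #X = d + 2 * i - 1) : ∃ B ∈ 𝓑, d + i ≤ #(X ∩ B) :=
  (h.2.2.2 X hX).exists

theorem exists_forall_card_inter_le_of_not_succ (h : IsBetaDesign 𝓑 v k d i)
    (hv : 2 * (i + 1) ≤ v - d + 1) (hnot : ¬ IsBetaDesign 𝓑 v k d (i + 1)) :
    ∃ Y : Finset α, #Y = d + 2 * i + 1 ∧ ∀ B ∈ 𝓑, #(Y ∩ B) ≤ d + i := by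
  by_contra! hcover
  refine hnot ⟨h.1, by omega, hv, fun X hX => ?_⟩
  obtain ⟨B, hB, hXB⟩ := hcover X (by omega)
  exact ⟨B, ⟨hB, by omega⟩, fun C hC =>
    h.1.eq_of_card_add_lt (X := X) hC.1 hB (by have := hC.2; omega)⟩

theorem exists_forall_card_inter_le (h : IsBetaDesign 𝓑 v k d i) (hk : d + i ≤ k + 1) :
    ∃ X : Finset α, #X + 2 = d + 2 * i ∧ ∀ B ∈ 𝓑, #(X ∩ B) + 1 ≤ d + i := by
  have hi := h.2.1
  have hkv := h.1.two_mul_le_add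
  obtain ⟨B, hB⟩ := h.1.exists_mem
  have hBk := h.1.card_block hB
  have hBc : #Bᶜ = v - k := by rw [card_compl, h.1.1, hBk]
  obtain ⟨P, hPB, hP⟩ := exists_subset_card_eq (s := B) (n := d + i - 1) (by omega)
  obtain ⟨I, hIB, hI⟩ := exists_subset_card_eq (s := Bᶜ) (n := i - 1) (by omega)
  have hIB' : Disjoint I B := disjoint_left.2 fun x hx => mem_compl.1 (hIB hx)
  have hcard : #(P ∪ I) = #P + #I :=
    card_union_of_disjoint (hIB'.symm.mono_left hPB)
  have hinter : (P ∪ I) ∩ B = P := by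
    rw [union_inter_distrib_right, inter_eq_left.2 hPB, disjoint_iff_inter_eq_empty.1 hIB',
      union_empty]
  refine ⟨P ∪ I, by omega, fun C hC => ?_⟩
  by_contra! hlt
  obtain rfl : C = B := h.1.eq_of_card_add_lt hC hB (X := P ∪ I) (by rw [hinter]; omega)
  rw [hinter] at hlt
  omega

theorem subset_biUnion_sdiff_block (h : IsBetaDesign 𝓑 v k d i) {X : Finset α}
    (hX : #X = d + 2 * i) (hXle : ∀ C ∈ 𝓑, #(X ∩ C) ≤ d + i) :
    X ⊆ {C ∈ 𝓑 | #(X ∩ C) = d + i}.biUnion (X \ ·) := by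
  intro b hb
  obtain ⟨C, hC, hXC⟩ := h.exists_le_card_inter (X := X.erase b)
    (by rw [card_erase_of_mem hb, hX])
  rw [erase_inter] at hXC
  have hle := hXle C hC
  have hbC : b ∉ C := fun hbC => by
    have := card_erase_add_one (mem_inter.2 ⟨hb, hbC⟩)
    omega
  rw [erase_eq_of_notMem fun hmem => hbC (mem_inter.1 hmem).2] at hXC
  exact mem_biUnion.2 ⟨C, mem_filter.2 ⟨hC, hle.antisymm hXC⟩, mem_sdiff.2 ⟨hb, hbC⟩⟩

-- With `y ∈ Y` fixed and `X = Y \ {y}`, the blocks `C` with `|X ∩ C| = d + i` avoid `y`; the sets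
-- `X \ C` cover `X`, and the sets `C \ X` are disjoint subsets of the complement of `Y`.
theorem mul_add_le_mul_of_not_succ
    (h : IsBetaDesign 𝓑 (d + 2 * i + 2 * a + e) (d + i + a) d i) (ha : 0 < a)
    (hnot : ¬ IsBetaDesign 𝓑 (d + 2 * i + 2 * a + e) (d + i + a) d (i + 1)) :
    a * d + i ≤ i * e := by
  obtain ⟨Y, hY, hYle⟩ := h.exists_forall_card_inter_le_of_not_succ (by omega) hnot
  obtain ⟨y, hy⟩ : Y.Nonempty := card_pos.1 (by omega)
  set X := Y.erase y
  have hX : #X = d + 2 * i := by rw [card_erase_of_mem hy]; omega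
  have hYc : #Yᶜ + 1 = 2 * a + e := by rw [card_compl, h.1.1]; omega
  have hXle (C : Finset α) (hC : C ∈ 𝓑) : #(X ∩ C) ≤ d + i :=
    (card_le_card (inter_subset_inter_right (erase_subset y Y))).trans (hYle C hC)
  have hpack : {C ∈ 𝓑 | #(X ∩ C) = d + i}.biUnion (· \ X) ⊆ Yᶜ := by
    refine biUnion_subset.2 fun C hC x hx => mem_compl.2 fun hxY => ?_
    obtain ⟨hC, hXC⟩ := mem_filter.1 hC
    obtain ⟨hxC, hxX⟩ := mem_sdiff.1 hx
    have hlt : #(X ∩ C) < #(Y ∩ C) := card_lt_card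
      ⟨inter_subset_inter_right (erase_subset y Y),
        fun hsub => hxX (mem_inter.1 (hsub (mem_inter.2 ⟨hxY, hxC⟩))).1⟩
    exact absurd (hYle C hC) (by omega)
  have hcount : #X * a ≤ #Yᶜ * i := by
    refine card_mul_le_card_mul_of_cover_of_packing (h.subset_biUnion_sdiff_block hX hXle)
      (fun C hC => ?_) hpack
      (h.1.pairwiseDisjoint_block_sdiff (by omega)) fun C hC => ?_
    · have := card_sdiff_add_card_inter X C
      have := (mem_filter.1 hC).2
      omega
    · have := card_sdiff_add_card_inter C X
      have := h.1.card_block (mem_filter.1 hC).1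
      have := (mem_filter.1 hC).2
      rw [inter_comm] at this
      omega
  rw [hX] at hcount
  nlinarith

-- Here `X` is taken as large as possible with all intersections at most `d + i - 1`; the blocks
-- attaining this bound cover the complement of `X` by the sets `C \ X`, and the sets `X \ C` are
-- disjoint.
theorem mul_le_mul_add
    (h : IsBetaDesign 𝓑 (d + 2 * i + 2 * a + e) (d + i + a) d i) :
    i * e ≤ (a + 1) * d + e := by
  have hi := h.2.1
  obtain ⟨X, hX, hXle⟩ := h.exists_forall_card_inter_le (by omega)
  have hXc : #Xᶜ = 2 * a + e + 2 := by rw [card_compl, h.1.1]; omega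
  have hcover : Xᶜ ⊆ {C ∈ 𝓑 | #(X ∩ C) = d + i - 1}.biUnion (· \ X) := by
    intro x hx
    obtain ⟨C, hC, hXC⟩ := h.exists_le_card_inter (X := insert x X)
      (by rw [card_insert_of_notMem (mem_compl.1 hx)]; omega)
    have hle := hXle C hC
    have hxC : x ∈ C := by
      by_contra hxC
      rw [insert_inter_of_notMem hxC] at hXC
      omega
    rw [insert_inter_of_mem hxC] at hXC
    have := card_insert_le x (X ∩ C)
    exact mem_biUnion.2 ⟨C, mem_filter.2 ⟨hC, by omega⟩, mem_sdiff.2 ⟨hxC, mem_compl.1 hx⟩⟩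
  have hcount : #Xᶜ * (i - 1) ≤ #X * (a + 1) := by
    refine card_mul_le_card_mul_of_cover_of_packing hcover (fun C hC => ?_)
      (biUnion_subset.2 fun C _ => sdiff_subset)
      (h.1.pairwiseDisjoint_sdiff_block (by omega)) fun C hC => ?_
    · have := card_sdiff_add_card_inter C X
      have := h.1.card_block (mem_filter.1 hC).1
      have := (mem_filter.1 hC).2
      rw [inter_comm] at this
      omega
    · have := card_sdiff_add_card_inter X C
      have := (mem_filter.1 hC).2
      omega
  obtain ⟨j, rfl⟩ : ∃ j, i = j + 1 := ⟨i - 1, by omega⟩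
  have hX' : #X = d + 2 * j := by omega
  rw [hXc, hX', Nat.add_sub_cancel] at hcount
  nlinarith

end IsBetaDesign

section Johnson

variable {R : Type*} [CommRing R]

/-- The up operator on functions on the Boolean lattice, used to move eigenfunctions from one
level to the next. -/
def upOp : (Finset α → R) →ₗ[R] Finset α → R where
  toFun f Z := ∑ x ∈ Z, f (Z.erase x)
  map_add' f g := by ext Z; exact sum_add_distrib
  map_smul' c f := by ext Z; exact (mul_sum Z _ c).symm

/-- The down operator on functions on the Boolean lattice, the transpose of `upOp`. -/
def downOp : (Finset α → R) →ₗ[R] Finset α → R where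
  toFun f X := ∑ s ∈ Xᶜ, f (insert s X)
  map_add' f g := by ext X; exact sum_add_distrib
  map_smul' c f := by ext X; exact (mul_sum Xᶜ _ c).symm

/-- The adjacency operator of the Johnson graphs, on all levels of the Boolean lattice at once:
the neighbours of `X` arise by exchanging a point `x ∈ X` for a point `s ∉ X`. -/
def johnsonAdj (f : Finset α → R) (X : Finset α) : R :=
  ∑ s ∈ Xᶜ, ∑ x ∈ X, f ((insert s X).erase x)

theorem johnsonAdj_congr {f g : Finset α → R} {X : Finset α} (hfg : ∀ Y, #Y = #X → f Y = g Y) :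
    johnsonAdj f X = johnsonAdj g X := by
  refine sum_congr rfl fun s hs => sum_congr rfl fun x hx => hfg _ ?_
  rw [card_erase_of_mem (mem_insert_of_mem hx), card_insert_of_notMem (mem_compl.1 hs),
    Nat.add_sub_cancel]

theorem johnsonAdj_const (c : R) (X : Finset α) : johnsonAdj (fun _ => c) X = #X * #Xᶜ * c := by
  simp only [johnsonAdj, sum_const, nsmul_eq_mul]
  ring

theorem downOp_upOp_apply (f : Finset α → R) (X : Finset α) :
    downOp (upOp f) X = #Xᶜ * f X + johnsonAdj f X := by
  simp only [downOp, upOp, johnsonAdj, LinearMap.coe_mk, AddHom.coe_mk]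
  rw [← nsmul_eq_mul, ← sum_const, ← sum_add_distrib]
  refine sum_congr rfl fun s hs => ?_
  rw [sum_insert (mem_compl.1 hs), erase_insert (mem_compl.1 hs)]

theorem upOp_downOp_apply (f : Finset α → R) (X : Finset α) :
    upOp (downOp f) X = #X * f X + johnsonAdj f X := by
  simp only [downOp, upOp, johnsonAdj, LinearMap.coe_mk, AddHom.coe_mk]
  rw [sum_comm, ← nsmul_eq_mul, ← sum_const, ← sum_add_distrib]
  refine sum_congr rfl fun x hx => ?_
  rw [compl_erase, sum_insert (by simpa using hx), insert_erase hx]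
  congr 1
  refine sum_congr rfl fun s hs => ?_
  rw [erase_insert_of_ne (ne_of_mem_of_not_mem hx (mem_compl.1 hs)).symm]

theorem downOp_upOp_eq (f : Finset α → R) (X : Finset α) :
    downOp (upOp f) X = upOp (downOp f) X + ((Fintype.card α : R) - 2 * #X) * f X := by
  rw [downOp_upOp_apply, upOp_downOp_apply, card_compl, Nat.cast_sub (card_le_univ X)]
  ring

omit [Fintype α] in
theorem upOp_apply_eq_zero {f : Finset α → R} {w : ℕ} (hf : ∀ X, #X ≠ w → f X = 0)
    {Z : Finset α} (hZ : #Z ≠ w + 1) : upOp f Z = 0 := by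
  refine sum_eq_zero fun x hx => hf _ fun hw => hZ ?_
  rw [← hw, card_erase_add_one hx]

-- If `f` is an eigenfunction of `downOp ∘ upOp` on level `w`, so is `upOp f` on level `w + 1`, with
-- a shifted eigenvalue; iterating, `upOp` must eventually kill it, which forces eigenvalue `0`.
theorem exists_eq_mul_of_downOp_upOp_eq_smul [NoZeroDivisors R] {f : Finset α → R} {w m : ℕ}
    {μ : R} (hcard : Fintype.card α = w + m) (hsupp : ∀ X, #X ≠ w → f X = 0) (hf : f ≠ 0)
    (heig : downOp (upOp f) = μ • f) : ∃ j ≤ m, μ = ((m : R) - j) * (w + 1 - j) := by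
  induction m generalizing f w μ with
  | zero =>
    have hup : upOp f = 0 := funext fun Z => upOp_apply_eq_zero hsupp (by
      have := card_le_univ Z
      omega)
    rw [hup, map_zero, eq_comm, smul_eq_zero] at heig
    exact ⟨0, le_rfl, by simpa using heig.resolve_right hf⟩
  | succ m ih =>
    by_cases hup : upOp f = 0
    · rw [hup, map_zero, eq_comm, smul_eq_zero] at heig
      exact ⟨m + 1, le_rfl, by simpa using heig.resolve_right hf⟩
    have hsupp_up (Z : Finset α) (hZ : #Z ≠ w + 1) : upOp f Z = 0 := upOp_apply_eq_zero hsupp hZ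
    have heig_up : downOp (upOp (upOp f)) = (μ + Fintype.card α - 2 * (w + 1)) • upOp f := by
      ext Z
      rw [downOp_upOp_eq, heig, map_smul, Pi.smul_apply, Pi.smul_apply, smul_eq_mul, smul_eq_mul]
      by_cases hZ : #Z = w + 1
      · rw [hZ]
        push_cast
        ring
      · rw [hsupp_up Z hZ]
        ring
    obtain ⟨j, hj, hμ⟩ := ih (by omega) hsupp_up hup heig_up
    refine ⟨j, by omega, ?_⟩
    rw [hcard] at hμ
    push_cast at hμ ⊢
    linear_combination hμ

/-- The `j`-th eigenvalue of the positive semidefinite Laplacian (degree minus adjacency) of the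
Johnson graphs on an `n`-set, the same for all levels on which it occurs. -/
def johnsonEigenvalue (n : ℕ) (j : R) : R := j * (n + 1 - j)

theorem exists_eq_johnsonEigenvalue [NoZeroDivisors R] {f : Finset α → R} {w m : ℕ} {ω : R}
    (hcard : Fintype.card α = w + m) (hf : ∃ X, #X = w ∧ f X ≠ 0)
    (heig : ∀ X, #X = w → johnsonAdj f X = (w * m - ω) * f X) :
    ∃ j ≤ m, ω = johnsonEigenvalue (w + m) (j : R) := by
  set g : Finset α → R := fun X => if #X = w then f X else 0 with hg
  have hsupp (X : Finset α) (hX : #X ≠ w) : g X = 0 := if_neg hX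
  have hne : g ≠ 0 := by
    obtain ⟨X, hX, hfX⟩ := hf
    exact fun h => hfX (by simpa [hg, hX] using congrFun h X)
  have hadj (X : Finset α) (hX : #X = w) : johnsonAdj g X = johnsonAdj f X :=
    johnsonAdj_congr fun Y hY => if_pos (hY.trans hX)
  have hdown : downOp (upOp g) = ((w + 1) * m - ω) • g := by
    ext X
    by_cases hX : #X = w
    · have hXc : #Xᶜ = m := by rw [card_compl]; omega
      rw [downOp_upOp_apply, hXc, hadj X hX, heig X hX, Pi.smul_apply, smul_eq_mul,
        show g X = f X from if_pos hX]
      ring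
    · rw [Pi.smul_apply, hsupp X hX, smul_zero]
      refine sum_eq_zero fun s hs => upOp_apply_eq_zero hsupp ?_
      rw [card_insert_of_notMem (mem_compl.1 hs)]
      omega
  obtain ⟨j, hj, hμ⟩ := exists_eq_mul_of_downOp_upOp_eq_smul hcard hsupp hne hdown
  refine ⟨j, hj, ?_⟩
  rw [johnsonEigenvalue]
  push_cast
  linear_combination -hμ

theorem johnsonEigenvalue_le {n : ℕ} {x y : ℝ} (hxy : x ≤ y) (hn : x + y ≤ n + 1) :
    johnsonEigenvalue n x ≤ johnsonEigenvalue n y := by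
  rw [johnsonEigenvalue, johnsonEigenvalue]
  nlinarith [mul_nonneg (sub_nonneg.2 hxy) (sub_nonneg.2 hn)]

end Johnson

section Zonal

variable {R : Type*} [CommRing R]

/-- The Laplacian of the Johnson graph on the `(k + q)`-subsets of a `(k + q + m)`-set, restricted
to zonal functions, that is, to functions `X ↦ ψ #(B \ X)` of the distance to a fixed `k`-set. It
is taken as adjacency minus degree, so that its eigenvalues are nonpositive. -/
def zonalLaplacian (k m q : R) (ψ : ℕ → R) (r : ℕ) : R :=
  (k - r) * (m - r) * (ψ (r + 1) - ψ r) + (q + r) * r * (ψ (r - 1) - ψ r)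

omit [Fintype α] in
theorem card_sdiff_erase_insert {B X : Finset α} {s x : α} (hs : s ∉ X) (hx : x ∈ X) :
    #(B \ (insert s X).erase x) + (if s ∈ B then 1 else 0) =
      #(B \ X) + (if x ∈ B then 1 else 0) := by
  have herase : #(B \ X.erase x) = #(B \ X) + (if x ∈ B then 1 else 0) := by
    split_ifs with hxB
    · rw [sdiff_erase hxB, card_insert_of_notMem fun h => (mem_sdiff.1 h).2 hx]
    · rw [erase_eq X x, sdiff_sdiff_right', inf_eq_inter, inter_singleton_of_notMem hxB,
        sup_eq_union, union_empty, add_zero]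
  rw [erase_insert_of_ne (ne_of_mem_of_not_mem hx hs).symm, sdiff_insert, ← herase]
  split_ifs with hsB
  · exact card_erase_add_one (mem_sdiff.2 ⟨hsB, fun h => hs (erase_subset x X h)⟩)
  · rw [erase_eq_of_notMem fun h => hsB (mem_sdiff.1 h).1, add_zero]

omit [Fintype α] in
theorem sum_ite_mem_const (S B : Finset α) (b c : R) :
    (∑ x ∈ S, if x ∈ B then b else c) = #(S ∩ B) * b + #(S \ B) * c := by
  rw [sum_ite, sum_const, sum_const, filter_mem_eq_inter, filter_notMem_eq_sdiff, nsmul_eq_mul,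
    nsmul_eq_mul]

theorem johnsonAdj_comp_card_sdiff (ψ : ℕ → R) (B X : Finset α) :
    johnsonAdj (fun Y => ψ #(B \ Y)) X =
      #(X ∩ B) * #(Xᶜ \ B) * ψ (#(B \ X) + 1) + #(X \ B) * #(B \ X) * ψ (#(B \ X) - 1) +
        (#(X ∩ B) * #(B \ X) + #(X \ B) * #(Xᶜ \ B)) * ψ #(B \ X) := by
  have hval (s : α) (hs : s ∈ Xᶜ) (x : α) (hx : x ∈ X) :
      ψ #(B \ (insert s X).erase x) =
        if x ∈ B then if s ∈ B then ψ #(B \ X) else ψ (#(B \ X) + 1)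
        else if s ∈ B then ψ (#(B \ X) - 1) else ψ #(B \ X) := by
    have := card_sdiff_erase_insert (B := B) (mem_compl.1 hs) hx
    split_ifs at this ⊢ <;> congr 1 <;> omega
  have hXc : Xᶜ ∩ B = B \ X := by rw [inter_comm, ← sdiff_eq_inter_compl]
  rw [johnsonAdj, sum_congr rfl fun s hs => sum_congr rfl fun x hx => hval s hs x hx]
  simp only [sum_ite_mem_const, sum_add_distrib, ← mul_sum, hXc]
  ring

theorem johnsonAdj_comp_card_sdiff_eq_zonalLaplacian {k m q : ℕ} (ψ : ℕ → R) {B X : Finset α}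
    (hcard : Fintype.card α = k + q + m) (hB : #B = k) (hX : #X = k + q) :
    johnsonAdj (fun Y => ψ #(B \ Y)) X =
      (k + q) * m * ψ #(B \ X) + zonalLaplacian (k : R) m q ψ #(B \ X) := by
  have hinter : (#(X ∩ B) : R) = k - #(B \ X) := by
    rw [eq_sub_iff_add_eq, inter_comm, ← Nat.cast_add, card_inter_add_card_sdiff, hB]
  have hsdiff : (#(X \ B) : R) = q + #(B \ X) := by
    have := card_sdiff_add_card B X
    have := card_sdiff_add_card X B
    rw [union_comm] at this
    rw [← Nat.cast_add, show #(X \ B) = q + #(B \ X) by omega]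
  have hcompl : (#(Xᶜ \ B) : R) = m - #(B \ X) := by
    have hXc : #Xᶜ = m := by rw [card_compl]; omega
    rw [eq_sub_iff_add_eq, sdiff_eq_inter_compl B, inter_comm B, ← Nat.cast_add,
      card_sdiff_add_card_inter, hXc]
  rw [johnsonAdj_comp_card_sdiff, hinter, hsdiff, hcompl, zonalLaplacian]
  ring

theorem johnsonAdj_sum (𝓑 : Finset (Finset α)) (F : Finset α → Finset α → R) (X : Finset α) :
    johnsonAdj (fun Y => ∑ B ∈ 𝓑, F B Y) X = ∑ B ∈ 𝓑, johnsonAdj (F B) X := by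
  simp only [johnsonAdj]
  rw [sum_comm (s := 𝓑)]
  exact sum_congr rfl fun B _ => sum_comm

end Zonal

section Lloyd

/-- The partial sums `∑ s < r, S s * t s` of the zonal eigenfunction `t` with `zonalLaplacian`
eigenvalue `-ω` and `S 0 * t 0 = 1`, where `S s` is the number of `(k + q)`-subsets at distance `s`
from a fixed `k`-subset of a `(k + q + m)`-set. As a polynomial in `ω`, `lloyd k m q ω (a + 1)` is
the Lloyd polynomial, of degree `a`, of perfect coverings of radius `a`. -/
noncomputable def lloyd (k m q ω : ℝ) : ℕ → ℝ
  | 0 => 0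
  | 1 => 1
  | r + 2 => lloyd k m q ω (r + 1) +
      ((k - r) * (m - r) * (lloyd k m q ω (r + 1) - lloyd k m q ω r) - ω * lloyd k m q ω (r + 1)) /
        ((q + r + 1) * (r + 1))

theorem lloyd_zero (k m q ω : ℝ) : lloyd k m q ω 0 = 0 := by rw [lloyd]

theorem lloyd_one (k m q ω : ℝ) : lloyd k m q ω 1 = 1 := by rw [lloyd]

theorem lloyd_add_two {q : ℝ} (hq : 0 ≤ q) (k m ω : ℝ) (r : ℕ) :
    (q + r + 1) * (r + 1) * (lloyd k m q ω (r + 2) - lloyd k m q ω (r + 1)) =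
      (k - r) * (m - r) * (lloyd k m q ω (r + 1) - lloyd k m q ω r) -
        ω * lloyd k m q ω (r + 1) := by
  rw [lloyd, add_sub_cancel_left, mul_div_cancel₀ _ (by positivity)]

theorem continuous_lloyd (k m q : ℝ) (r : ℕ) : Continuous fun ω => lloyd k m q ω r := by
  induction r using Nat.twoStepInduction with
  | zero => simpa only [lloyd] using continuous_const
  | one => simpa only [lloyd] using continuous_const
  | more r ih ih' =>
    simp only [lloyd]
    fun_prop

variable {k m q r : ℕ} {ω : ℝ}

/-- The number of `(k + q)`-subsets `X` of a `(k + q + m)`-set that omit exactly `r` points of a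
fixed `k`-subset. -/
def sphereCard (k m q r : ℕ) : ℕ := k.choose r * (m + q).choose (q + r)

theorem sphereCard_pos (hk : r ≤ k) (hm : r ≤ m) : 0 < sphereCard k m q r :=
  Nat.mul_pos (Nat.choose_pos hk) (Nat.choose_pos (by omega))

theorem sphereCard_mul (hk : r ≤ k) (hm : r ≤ m) :
    (sphereCard k m q r : ℝ) * ((k - r) * (m - r)) =
      sphereCard k m q (r + 1) * ((q + r + 1) * (r + 1)) := by
  rw [← Nat.cast_sub hk, ← Nat.cast_sub hm]
  norm_cast
  have hchoose := Nat.choose_succ_right_eq (m + q) (q + r)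
  rw [show m + q - (q + r) = m - r by omega] at hchoose
  rw [sphereCard, sphereCard, ← add_assoc, mul_mul_mul_comm, ← Nat.choose_succ_right_eq, ← hchoose]
  ring

/-- The zonal eigenfunction of the Johnson graph with `zonalLaplacian` eigenvalue `-ω`. -/
noncomputable def zonalEigenfunction (k m q : ℕ) (ω : ℝ) (r : ℕ) : ℝ :=
  (lloyd k m q ω (r + 1) - lloyd k m q ω r) / sphereCard k m q r

theorem sphereCard_mul_zonalEigenfunction (hk : r ≤ k) (hm : r ≤ m) :
    sphereCard k m q r * zonalEigenfunction k m q ω r =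
      lloyd k m q ω (r + 1) - lloyd k m q ω r :=
  mul_div_cancel₀ _ (Nat.cast_ne_zero.2 (sphereCard_pos hk hm).ne')

theorem zonalEigenfunction_zero_ne_zero : zonalEigenfunction k m q ω 0 ≠ 0 := by
  intro h
  have hsum := sphereCard_mul_zonalEigenfunction (q := q) (ω := ω) k.zero_le m.zero_le
  rw [h, lloyd_one, lloyd_zero] at hsum
  norm_num at hsum

-- The total outflow from the ball of radius `r` is `-ω` times the sum of the eigenfunction over it.
theorem sphereCard_mul_zonalEigenfunction_sub (hk : r < k) (hm : r < m) :
    sphereCard k m q r * ((k - r) * (m - r)) *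
        (zonalEigenfunction k m q ω (r + 1) - zonalEigenfunction k m q ω r) =
      -ω * lloyd k m q ω (r + 1) := by
  have hr := sphereCard_mul_zonalEigenfunction (q := q) (ω := ω) hk.le hm.le
  have hr' := sphereCard_mul_zonalEigenfunction (q := q) (ω := ω) hk hm
  have hstep := lloyd_add_two (Nat.cast_nonneg q) k m ω r
  linear_combination zonalEigenfunction k m q ω (r + 1) * sphereCard_mul (q := q) hk.le hm.le +
    ((q : ℝ) + r + 1) * (r + 1) * hr' - ((k : ℝ) - r) * (m - r) * hr + hstep

theorem zonalLaplacian_zonalEigenfunction (hk : r < k) (hm : r < m) :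
    zonalLaplacian (k : ℝ) m q (zonalEigenfunction k m q ω) r =
      -ω * zonalEigenfunction k m q ω r := by
  have hinner : sphereCard k m q r * (((q : ℝ) + r) * r) *
      (zonalEigenfunction k m q ω (r - 1) - zonalEigenfunction k m q ω r) =
        ω * lloyd k m q ω r := by
    obtain _ | r := r
    · rw [lloyd_zero]
      simp
    · rw [Nat.add_sub_cancel]
      push_cast
      linear_combination -sphereCard_mul_zonalEigenfunction_sub (q := q) (ω := ω)
          (r.lt_succ_self.trans hk) (r.lt_succ_self.trans hm) +
        (zonalEigenfunction k m q ω (r + 1) - zonalEigenfunction k m q ω r) *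
          sphereCard_mul (q := q) (r.le_succ.trans hk.le) (r.le_succ.trans hm.le)
  have hS : (sphereCard k m q r : ℝ) ≠ 0 := Nat.cast_ne_zero.2 (sphereCard_pos hk.le hm.le).ne'
  apply mul_left_cancel₀ hS
  rw [zonalLaplacian]
  linear_combination sphereCard_mul_zonalEigenfunction_sub (q := q) (ω := ω) hk hm + hinner +
    ω * sphereCard_mul_zonalEigenfunction (q := q) (ω := ω) hk.le hm.le

theorem zonalEigenfunction_succ_eq (hk : r < k) (hm : r < m)
    (hroot : lloyd k m q ω (r + 1) = 0) :
    zonalEigenfunction k m q ω (r + 1) = zonalEigenfunction k m q ω r := by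
  have hout := sphereCard_mul_zonalEigenfunction_sub (q := q) (ω := ω) hk hm
  rw [hroot, mul_zero] at hout
  have hS : (sphereCard k m q r : ℝ) ≠ 0 := Nat.cast_ne_zero.2 (sphereCard_pos hk.le hm.le).ne'
  have hk' : (k : ℝ) - r ≠ 0 := sub_ne_zero.2 (Nat.cast_lt.2 hk).ne'
  have hm' : (m : ℝ) - r ≠ 0 := sub_ne_zero.2 (Nat.cast_lt.2 hm).ne'
  exact sub_eq_zero.1 ((mul_eq_zero_iff_left (by positivity)).1 hout)

theorem zonalLaplacian_truncate {R : Type*} [CommRing R] {k m q ω : R} {t : ℕ → R} {a : ℕ}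
    (heig : ∀ r ≤ a, zonalLaplacian k m q t r = -ω * t r) (hflat : t (a + 1) = t a) (r : ℕ) :
    zonalLaplacian k m q (fun s => if s ≤ a then t s else 0) r =
      -ω * (if r ≤ a then t r else 0) +
        t a * zonalLaplacian k m q (fun s => if s ≤ a then 1 else 0) r := by
  simp only [zonalLaplacian] at heig ⊢
  obtain hr | rfl | rfl | hr : r < a ∨ r = a ∨ r = a + 1 ∨ a + 1 < r := by omega
  · have := heig r hr.le
    rw [if_pos (by omega), if_pos (by omega), if_pos (by omega), if_pos (by omega),
      if_pos (by omega), if_pos (by omega)]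
    linear_combination this
  · have := heig r le_rfl
    simp only [hflat, le_refl, if_true, show ¬ r + 1 ≤ r by omega, if_false,
      show r - 1 ≤ r by omega] at this ⊢
    linear_combination this
  · simp only [show ¬ a + 1 + 1 ≤ a by omega, show ¬ a + 1 ≤ a by omega, if_false,
      Nat.add_sub_cancel, le_refl, if_true]
    ring
  · simp only [show ¬ r + 1 ≤ a by omega, show ¬ r ≤ a by omega, if_false,
      show ¬ r - 1 ≤ a by omega]
    ring

/-- The sum of the zonal functions `X ↦ ψ #(B \ X)` with `B ∈ 𝓑`, each of them cut off outside the
ball of radius `a` around `B`. -/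
def ballSum {R : Type*} [CommRing R] (𝓑 : Finset (Finset α)) (a : ℕ) (ψ : ℕ → R) (X : Finset α) :
    R :=
  ∑ B ∈ 𝓑, if #(B \ X) ≤ a then ψ #(B \ X) else 0

omit [Fintype α] in
theorem ballSum_eq {R : Type*} [CommRing R] {𝓑 : Finset (Finset α)} {a : ℕ} {X B : Finset α}
    (huniq : ∃! B, B ∈ 𝓑 ∧ #(B \ X) ≤ a) (hB : B ∈ 𝓑) (hXB : #(B \ X) ≤ a) (ψ : ℕ → R) :
    ballSum 𝓑 a ψ X = ψ #(B \ X) := by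
  refine (sum_eq_single_of_mem B hB fun C hC hCB => if_neg fun hXC => hCB ?_).trans (if_pos hXB)
  exact huniq.unique ⟨hC, hXC⟩ ⟨hB, hXB⟩

theorem johnsonAdj_ballSum {R : Type*} [CommRing R] {𝓑 : Finset (Finset α)} {X : Finset α}
    (hcard : Fintype.card α = k + q + m) (hk : ∀ B ∈ 𝓑, #B = k) (hX : #X = k + q) (a : ℕ)
    (ψ : ℕ → R) :
    johnsonAdj (ballSum 𝓑 a ψ) X = (k + q) * m * ballSum 𝓑 a ψ X +
      ∑ B ∈ 𝓑, zonalLaplacian (k : R) m q (fun r => if r ≤ a then ψ r else 0) #(B \ X) := by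
  refine (johnsonAdj_sum 𝓑 (fun B Y => if #(B \ Y) ≤ a then ψ #(B \ Y) else 0) X).trans ?_
  rw [ballSum, mul_sum, ← sum_add_distrib]
  exact sum_congr rfl fun B hB => johnsonAdj_comp_card_sdiff_eq_zonalLaplacian
    (fun r => if r ≤ a then ψ r else 0) hcard (hk B hB) hX

-- The zonal eigenfunctions around the members of `𝓑`, cut off at radius `a`, add up to an
-- eigenfunction of the Johnson graph: `hroot` makes the errors at the boundaries of the balls
-- multiples of the Laplacian of the constant function `1`.
theorem exists_eq_johnsonEigenvalue_of_lloyd_eq_zero {𝓑 : Finset (Finset α)} {a : ℕ}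
    (hcard : Fintype.card α = k + q + m) (hne : 𝓑.Nonempty) (hk : ∀ B ∈ 𝓑, #B = k)
    (huniq : ∀ X : Finset α, #X = k + q → ∃! B, B ∈ 𝓑 ∧ #(B \ X) ≤ a)
    (hak : a < k) (ham : a < m) (hroot : lloyd k m q ω (a + 1) = 0) :
    ∃ j ≤ m, ω = johnsonEigenvalue (k + q + m) (j : ℝ) := by
  set t := zonalEigenfunction k m q ω
  refine exists_eq_johnsonEigenvalue (f := ballSum 𝓑 a t) hcard ?_ fun X hX => ?_
  · obtain ⟨B, hB⟩ := hne
    obtain ⟨X, hBX, hX⟩ := exists_superset_card_eq (s := B) (n := k + q) (by rw [hk B hB]; omega)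
      (by omega)
    have hdist : #(B \ X) = 0 := by rw [sdiff_eq_empty_iff_subset.2 hBX, card_empty]
    refine ⟨X, hX, ?_⟩
    rw [ballSum_eq (huniq X hX) hB (hdist.trans_le a.zero_le), hdist]
    exact zonalEigenfunction_zero_ne_zero
  · have hboundary :
        ∑ B ∈ 𝓑, zonalLaplacian (k : ℝ) m q (fun r => if r ≤ a then 1 else 0) #(B \ X) = 0 := by
      have hone {Y : Finset α} (hY : #Y = #X) : ballSum 𝓑 a (fun _ => (1 : ℝ)) Y = 1 := by
        obtain ⟨B, hB, -⟩ := huniq Y (hY.trans hX)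
        exact ballSum_eq (huniq Y (hY.trans hX)) hB.1 hB.2 _
      have hadj := johnsonAdj_ballSum hcard hk hX a fun _ => (1 : ℝ)
      have hXc : #Xᶜ = m := by rw [card_compl]; omega
      rw [johnsonAdj_congr fun Y hY => hone hY, johnsonAdj_const, hone rfl, hXc, hX] at hadj
      push_cast at hadj
      linear_combination -hadj
    have htrunc := zonalLaplacian_truncate
      (fun r hr => zonalLaplacian_zonalEigenfunction (hr.trans_lt hak) (hr.trans_lt ham))
      (zonalEigenfunction_succ_eq hak ham hroot)
    rw [johnsonAdj_ballSum hcard hk hX, sum_congr rfl fun B _ => htrunc _, sum_add_distrib,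
      ← mul_sum, ← mul_sum, hboundary, ballSum]
    push_cast
    ring

end Lloyd

section LloydRoot

theorem mul_lloyd_succ_of_recurrence {k q ω : ℝ} (hq : 0 ≤ q) {W : ℕ} {p : ℕ → ℝ}
    (hp : ∀ n : ℕ, (q + n + 1) * (W - n) * p (n + 1) +
      ((q + n + 1) * (n + 1) + (k - n) * (W + 1 - n) - ω) * p n + (k - n) * n * p (n - 1) = 0)
    (n : ℕ) :
    p 0 * lloyd k (W + 1) q ω (n + 1) = (-1) ^ n * W.choose n * p n := by
  have hchoose (n : ℕ) : (W.choose (n + 1) : ℝ) * (n + 1) = W.choose n * (W - n) := by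
    rcases le_or_gt n W with hn | hn
    · rw [← Nat.cast_sub hn]
      exact_mod_cast Nat.choose_succ_right_eq W n
    · simp [Nat.choose_eq_zero_of_lt hn, Nat.choose_eq_zero_of_lt (hn.trans n.lt_succ_self)]
  induction n using Nat.twoStepInduction with
  | zero => rw [lloyd_one]; simp
  | one =>
    have hstep := lloyd_add_two hq k (W + 1) ω 0
    have := hp 0
    rw [lloyd_zero, lloyd_one] at hstep
    apply mul_left_cancel₀ (by positivity : q + 1 ≠ 0)
    norm_num at hstep this ⊢
    linear_combination p 0 * hstep + this
  | more n ih ih' =>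
    have hstep := lloyd_add_two hq k (W + 1) ω (n + 1)
    have := hp (n + 1)
    have hn := hchoose n
    have hn' := hchoose (n + 1)
    apply mul_left_cancel₀ (by positivity : (q + (n + 1 : ℕ) + 1) * ((n + 1 : ℕ) + 1) ≠ 0)
    rw [Nat.add_sub_cancel] at this
    push_cast at hstep this hn' ⊢
    linear_combination p 0 * hstep +
      ((q + n + 2) * (n + 2) + (k - (n + 1)) * (W + 1 - (n + 1)) - ω) * ih' -
      (k - (n + 1)) * (W + 1 - (n + 1)) * ih - (-1) ^ n * W.choose (n + 1) * this -
      (-1) ^ n * (q + n + 2) * p (n + 2) * hn' + (-1) ^ n * (k - (n + 1)) * p n * hn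

/-- The linear factor of the Lloyd polynomial of degree `n` at the eigenvalue `W * (k + q + 2)`, of
index `W`, of the Johnson scheme on `k + q + W + 1` points. -/
def hahnLinear (k q W n : ℝ) : ℝ := (q + 1) * (W - n) - (k - W) * n

/-- The quadratic factor of the Lloyd polynomial of degree `n` at the eigenvalue
`(W - 1) * (k + q + 3)`, of index `W - 1`, of the Johnson scheme on `k + q + W + 1` points. -/
def hahnQuadratic (k q W n : ℝ) : ℝ :=
  (q + 2) * (q + 1) * (W - n) * (W - 1 - n) - 2 * (q + 2) * (k - W + 1) * n * (W - n) +
    (k - W + 1) * (k - W) * n * (n - 1)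

theorem hahnLinear_zero_mul_lloyd_succ {k q : ℝ} (hq : 0 ≤ q) (W n : ℕ) :
    hahnLinear k q W 0 * lloyd k (W + 1) q (W * (k + q + 2)) (n + 1) =
      (-1) ^ n * W.choose n * hahnLinear k q W n := by
  refine mod_cast mul_lloyd_succ_of_recurrence (p := fun n => hahnLinear k q W n) hq (fun n => ?_) n
  obtain _ | n := n <;> simp only [hahnLinear, Nat.add_sub_cancel] <;> push_cast <;> ring

theorem hahnQuadratic_zero_mul_lloyd_succ {k q : ℝ} (hq : 0 ≤ q) (W n : ℕ) :
    hahnQuadratic k q W 0 * lloyd k (W + 1) q ((W - 1) * (k + q + 3)) (n + 1) =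
      (-1) ^ n * W.choose n * hahnQuadratic k q W n := by
  refine mod_cast
    mul_lloyd_succ_of_recurrence (p := fun n => hahnQuadratic k q W n) hq (fun n => ?_) n
  obtain _ | n := n <;> simp only [hahnQuadratic, Nat.add_sub_cancel] <;> push_cast <;> ring

theorem exists_lloyd_eq_zero {k q : ℝ} (hq : 0 ≤ q) {W n : ℕ} (hW : 2 ≤ W) (hWk : W ≤ k + q + 1)
    (hnW : n ≤ W) (hlin : 0 < hahnLinear k q W n) (hquad : hahnQuadratic k q W n < 0) :
    ∃ ω ∈ Set.Ioo ((W - 1) * (k + q + 3)) (W * (k + q + 2)),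
      lloyd k (W + 1) q ω (n + 1) = 0 := by
  have hW' : (2 : ℝ) ≤ W := mod_cast hW
  have hchoose : (0 : ℝ) < W.choose n := mod_cast Nat.choose_pos hnW
  have hsign : ((-1 : ℝ) ^ n) * (-1) ^ n = 1 := by rw [← mul_pow]; norm_num
  have hright : 0 < (-1) ^ n * lloyd k (W + 1) q (W * (k + q + 2)) (n + 1) := by
    have hzero : 0 < hahnLinear k q W 0 := by rw [hahnLinear]; nlinarith
    refine pos_of_mul_pos_right ?_ hzero.le
    calc 0 < W.choose n * hahnLinear k q W n := mul_pos hchoose hlin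
      _ = _ := by
        linear_combination -(-1) ^ n * hahnLinear_zero_mul_lloyd_succ (k := k) hq W n -
          W.choose n * hahnLinear k q W n * hsign
  have hleft : (-1) ^ n * lloyd k (W + 1) q ((W - 1) * (k + q + 3)) (n + 1) < 0 := by
    have hzero : 0 < hahnQuadratic k q W 0 := by
      have : 0 < (q + 2) * (q + 1) * W * (W - 1) := by
        have : (0 : ℝ) < W - 1 := by linarith
        positivity
      simpa [hahnQuadratic] using this
    refine neg_of_mul_neg_right ?_ hzero.le
    calc _ = W.choose n * hahnQuadratic k q W n := by
          linear_combination (-1) ^ n * hahnQuadratic_zero_mul_lloyd_succ (k := k) hq W n +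
            W.choose n * hahnQuadratic k q W n * hsign
      _ < 0 := mul_neg_of_pos_of_neg hchoose hquad
  obtain ⟨ω, hω, hroot⟩ := intermediate_value_Ioo (by linarith)
    ((continuous_lloyd k (W + 1) q (n + 1)).const_mul ((-1) ^ n)).continuousOn
    (show (0 : ℝ) ∈ Set.Ioo _ _ from ⟨hleft, hright⟩)
  exact ⟨ω, hω, (mul_eq_zero.1 hroot).resolve_left (by simp)⟩

theorem johnsonEigenvalue_notMem_Ioo {k q W j : ℕ} (hWk : W ≤ k + q + 1) (hj : j ≤ W + 1) :
    johnsonEigenvalue (k + q + (W + 1)) (j : ℝ) ∉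
      Set.Ioo ((W - 1) * (k + q + 3) : ℝ) (W * (k + q + 2)) := by
  have hWk' : (W : ℝ) ≤ k + q + 1 := mod_cast hWk
  have hleft : johnsonEigenvalue (k + q + (W + 1)) (W - 1 : ℝ) = (W - 1) * (k + q + 3) := by
    rw [johnsonEigenvalue]
    push_cast
    ring
  have hright : johnsonEigenvalue (k + q + (W + 1)) (W : ℝ) = W * (k + q + 2) := by
    rw [johnsonEigenvalue]
    push_cast
    ring
  rw [← hleft, ← hright, Set.mem_Ioo, not_and_or, not_lt, not_lt]
  refine (lt_or_ge j W).imp (fun hjW => ?_) fun hjW => ?_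
  · have hjW' : (j : ℝ) + 1 ≤ W := mod_cast hjW
    exact johnsonEigenvalue_le (by linarith) (by push_cast; linarith)
  · have hj' : (j : ℝ) ≤ W + 1 := mod_cast hj
    exact johnsonEigenvalue_le (mod_cast hjW) (by push_cast; linarith)

theorem hahnQuadratic_nonneg {𝓑 : Finset (Finset α)} {k q W a : ℕ}
    (hcard : Fintype.card α = k + q + (W + 1)) (hne : 𝓑.Nonempty) (hk : ∀ B ∈ 𝓑, #B = k)
    (huniq : ∀ X : Finset α, #X = k + q → ∃! B, B ∈ 𝓑 ∧ #(B \ X) ≤ a) (hak : a < k)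
    (haW : a ≤ W) (hW : 2 ≤ W) (hWk : W ≤ k + q + 1) (hlin : 0 < hahnLinear k q W a) :
    0 ≤ hahnQuadratic k q W a := by
  by_contra! hquad
  obtain ⟨ω, hω, hroot⟩ :=
    exists_lloyd_eq_zero q.cast_nonneg hW (mod_cast hWk) haW hlin hquad
  obtain ⟨j, hj, rfl⟩ := exists_eq_johnsonEigenvalue_of_lloyd_eq_zero hcard hne hk huniq hak
    (Nat.lt_succ_of_le haW) (by rwa [Nat.cast_add_one])
  exact johnsonEigenvalue_notMem_Ioo hWk hj hω

end LloydRoot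

section GapQuadratic

theorem quadratic_nonpos_of_mem_Icc {A B C x y z : ℝ} (hA : 0 ≤ A) (hx : x ∈ Set.Icc y z)
    (hy : A * y ^ 2 + B * y + C ≤ 0) (hz : A * z ^ 2 + B * z + C ≤ 0) :
    A * x ^ 2 + B * x + C ≤ 0 := by
  have hconvex : ConvexOn ℝ Set.univ fun x : ℝ => A * x ^ 2 + B * x + C :=
    ((even_two.convexOn_pow.smul hA).add
      ((LinearMap.mulLeft ℝ B).convexOn convex_univ)).add_const C
  exact (hconvex.le_max_of_mem_Icc (Set.mem_univ y) (Set.mem_univ z) hx).trans (max_le hy hz)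

/-- The quadratic polynomial in `x = k - d` whose larger root is the lower bound for `k - d`. -/
def gapQuadratic (i x : ℝ) : ℝ :=
  (i + 1) * x ^ 2 - (i - 1) * (3 * i - 1) * x + 2 * i * (i - 1) ^ 2

theorem gapQuadratic_root_eq_zero {i : ℝ} (hi : i + 1 ≠ 0) (hdisc : 0 ≤ i ^ 2 - 14 * i + 1) :
    gapQuadratic i ((i - 1) * (3 * i - 1 + √(i ^ 2 - 14 * i + 1)) / (2 * (i + 1))) = 0 := by
  have hsq := Real.sq_sqrt hdisc
  rw [gapQuadratic]
  generalize √(i ^ 2 - 14 * i + 1) = s at hsq ⊢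
  field_simp
  linear_combination (i - 1) ^ 2 * hsq

theorem lt_of_gapQuadratic_nonpos_of_pos {i x y : ℝ} (hi : 18 ≤ i) (hx : i + 2 ≤ x)
    (hypos : gapQuadratic i y ≤ 0) (hxpos : 0 < gapQuadratic i x) : y < x := by
  have hleft : gapQuadratic i (i + 2) ≤ 0 := by rw [gapQuadratic]; nlinarith
  by_contra! hxy
  rw [gapQuadratic, sub_eq_add_neg, ← neg_mul] at hleft hypos hxpos
  exact hxpos.not_ge (quadratic_nonpos_of_mem_Icc (by linarith) ⟨hx, hxy⟩ hleft hypos)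

theorem one_lt_of_gapQuadratic_nonpos {q a : ℝ} (hq : 0 ≤ q) (ha : 2 ≤ a)
    (hgap : gapQuadratic (q + a + 1) (q + a + 1 + a) ≤ 0) : 1 < q := by
  by_contra! hq1
  rw [gapQuadratic] at hgap
  nlinarith [mul_nonneg hq (sub_nonneg.2 hq1), mul_nonneg (sub_nonneg.2 ha) (sub_nonneg.2 hq1)]

-- With `x = e + a` and `D = d - e + q + 2`, the counting bounds read `a D < (q + 1) x` and
-- `(q - 1) x < (a + 1) D`. The part of `hahnQuadratic` homogeneous in `(x, D)` is convex in `x`; at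
-- the lower end of this range it is negative, and at the upper end it is a positive multiple of
-- `gapQuadratic`.
theorem hahnQuadratic_neg {d e q a : ℝ} (hq : 0 ≤ q) (ha : 2 ≤ a) (hed : e ≤ d)
    (hlower : a * d + (q + a + 1) ≤ (q + a + 1) * e) (hupper : (q + a + 1) * e ≤ (a + 1) * d + e)
    (hgap : gapQuadratic (q + a + 1) (q + a + 1 + a) ≤ 0) :
    hahnQuadratic (d + (q + a + 1) + a) q (e + 2 * a) a < 0 := by
  have hq1 := one_lt_of_gapQuadratic_nonpos hq ha hgap
  obtain ⟨x, hx⟩ : ∃ x, x = e + a := ⟨_, rfl⟩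
  obtain ⟨D, hD⟩ : ∃ D, D = d - e + q + 2 := ⟨_, rfl⟩
  have hDpos : 0 < D := by linarith
  have hxlower : a * D < (q + 1) * x := by subst x D; nlinarith
  have hxupper : (q - 1) * x < (a + 1) * D := by subst x D; nlinarith
  have hxpos : 0 < x := by
    have : 0 < a * D := by positivity
    exact pos_of_mul_pos_right (this.trans hxlower) (by linarith)
  have hhom : (q + 2) * (q + 1) * x ^ 2 + -(2 * a * (q + 2) * D) * x + a * (a - 1) * D ^ 2 ≤ 0 := by
    have hq1' : 0 < q - 1 := by linarith
    refine quadratic_nonpos_of_mem_Icc (y := a * D / (q + 1)) (z := (a + 1) * D / (q - 1))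
      (by positivity) ⟨?_, ?_⟩ ?_ ?_
    · rw [div_le_iff₀ (by linarith)]; linarith
    · rw [le_div_iff₀ hq1']; linarith
    · calc _ = -(a * (a + q + 1) * D ^ 2 / (q + 1)) := by field_simp; ring
        _ ≤ 0 := neg_nonpos.2 (by positivity)
    · calc _ = D ^ 2 / (q - 1) ^ 2 * gapQuadratic (q + a + 1) (q + a + 1 + a) := by
            rw [gapQuadratic]; field_simp; ring
        _ ≤ 0 := mul_nonpos_of_nonneg_of_nonpos (by positivity) hgap
  have hcross : 0 < (q + 2) * (q + 1) * x + a * (a - 1) * D := by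
    have : 0 < a - 1 := by linarith
    positivity
  rw [hahnQuadratic]
  subst x D
  linear_combination hhom + hcross

end GapQuadratic

namespace IsBetaDesign

variable {𝓑 : Finset (Finset α)} {d e a i : ℕ}

theorem existsUnique_card_sdiff_le {v : ℕ} (h : IsBetaDesign 𝓑 v (d + i + a) d i) {X : Finset α}
    (hX : #X = d + 2 * i - 1) : ∃! B, B ∈ 𝓑 ∧ #(B \ X) ≤ a := by
  refine (existsUnique_congr fun B => and_congr_right fun hB => ?_).1 (h.2.2.2 X hX)
  have := card_sdiff_add_card_inter B X
  have := h.1.card_block hB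
  rw [inter_comm]
  omega

theorem lt_of_not_succ (h : IsBetaDesign 𝓑 (d + 2 * i + 2 * a + e) (d + i + a) d i) (ha : 0 < a)
    (hed : e ≤ d)
    (hnot : ¬ IsBetaDesign 𝓑 (d + 2 * i + 2 * a + e) (d + i + a) d (i + 1)) : a < i := by
  by_contra! hia
  have := h.mul_add_le_mul_of_not_succ ha hnot
  have := Nat.mul_le_mul hia hed
  have := h.2.1
  omega

theorem gapQuadratic_pos (h : IsBetaDesign 𝓑 (d + 2 * i + 2 * a + e) (d + i + a) d i)
    (ha : 2 ≤ a) (hed : e ≤ d)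
    (hnot : ¬ IsBetaDesign 𝓑 (d + 2 * i + 2 * a + e) (d + i + a) d (i + 1)) :
    0 < gapQuadratic i (i + a) := by
  by_contra! hgap
  have hlower := h.mul_add_le_mul_of_not_succ (by omega) hnot
  have hupper := h.mul_le_mul_add
  obtain ⟨q, rfl⟩ : ∃ q, i = q + a + 1 :=
    ⟨i - a - 1, by have := h.lt_of_not_succ (by omega) hed hnot; omega⟩
  have hlower' : (a : ℝ) * d + (q + a + 1) ≤ (q + a + 1) * e := mod_cast hlower
  have hupper' : ((q : ℝ) + a + 1) * e ≤ (a + 1) * d + e := mod_cast hupper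
  have hlin : 0 < hahnLinear (d + (q + a + 1) + a : ℕ) q (e + 2 * a : ℕ) a := by
    rw [hahnLinear]
    push_cast
    linarith [q.cast_nonneg (α := ℝ)]
  have hcard : Fintype.card α = d + (q + a + 1) + a + q + (e + 2 * a + 1) := by rw [h.1.1]; ring
  have hquad := hahnQuadratic_nonneg hcard h.1.exists_mem (fun B hB => h.1.card_block hB)
    (fun X hX => h.existsUnique_card_sdiff_le (by omega)) (by omega) (by omega) (by omega)
    (by omega) hlin
  refine hquad.not_gt ?_
  push_cast at hgap ⊢
  exact hahnQuadratic_neg q.cast_nonneg (mod_cast ha) (mod_cast hed) hlower' hupper' hgap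

end IsBetaDesign

/-- **Theorem 5 (1).** Let `𝓑` be a `β(i)` design with parameter `(v, k, d)`, `v ≤ 2k`
and `k - d ≥ i + 2`.  If `𝓑` is not a `β(i+1)` design and `i ≥ 18`, then
`(i-1)(3i - 1 + √(i² - 14i + 1))/(2(i+1)) < k - d ≤ 2i`; in particular
`2i - 8 ≤ k - d ≤ 2i`. -/
theorem beta_design_kd_lower (𝓑 : Finset (Finset α)) (v k d i : ℕ)
    (hB : IsBetaDesign 𝓑 v k d i) (hv : v ≤ 2 * k) (hkd : i + 2 ≤ k - d)
    (hnot : ¬ IsBetaDesign 𝓑 v k d (i + 1)) (hi : 18 ≤ i) :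
    (((i : ℝ) - 1) * (3 * (i : ℝ) - 1 + Real.sqrt ((i : ℝ) ^ 2 - 14 * (i : ℝ) + 1))
        / (2 * ((i : ℝ) + 1)) < (k : ℝ) - (d : ℝ)) ∧
    k - d ≤ 2 * i ∧ 2 * i - 8 ≤ k - d := by
  have hvd := hB.1.two_mul_le_add
  obtain ⟨a, rfl⟩ : ∃ a, k = d + i + a := ⟨k - d - i, by omega⟩
  obtain ⟨e, rfl⟩ : ∃ e, v = d + 2 * i + 2 * a + e := ⟨v - (d + 2 * i + 2 * a), by omega⟩
  have ha : 2 ≤ a := by omega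
  have hed : e ≤ d := by omega
  have hai : a < i := hB.lt_of_not_succ (by omega) hed hnot
  have hgap : 0 < gapQuadratic i (i + a) := hB.gapQuadratic_pos ha hed hnot
  have hi' : (18 : ℝ) ≤ i := mod_cast hi
  have ha' : (2 : ℝ) ≤ a := mod_cast ha
  have hlt {y : ℝ} (hy : gapQuadratic i y ≤ 0) : y < i + a :=
    lt_of_gapQuadratic_nonpos_of_pos hi' (by linarith) hy hgap
  have hroot := hlt (gapQuadratic_root_eq_zero (by linarith) (by nlinarith)).le
  have hlower : (2 * i - 9 : ℝ) < i + a := hlt (by rw [gapQuadratic]; nlinarith)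
  have hlower' : 2 * i < i + a + 9 := by exact_mod_cast sub_lt_iff_lt_add.1 hlower
  exact ⟨by push_cast; linarith, by omega, by omega⟩
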